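/- Let (H, μ, Δ, α, c, R) be a quasi-triangular Hom-bialgebra over a commutative ring k. Then for each integer n ≥ 0, H^n = (H, μ^(n), Δ^(n), α^(2^n), c, R), where μ^(n) = α^(2^n − 1) ∘ μ and Δ^(n) = Δ ∘ α^(2^n − 1), is again a quasi-triangular Hom-bialgebra; in particular, c is a weak unit of (H, μ^(n), α^(2^n)) and R satisfies the three quasi-triangularity axioms with respect to μ^(n), Δ^(n), and α^(2^n). -/

import Mathlib

/-!
Quasi-triangular Hom-bialgebras are stable under twisting by any linear `β` that is multiplicative,
comultiplicative and commutes with `α`: the tuple `(H, β ∘ μ, Δ ∘ β, β ∘ α, c, R)` is again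
quasi-triangular. The reason is that each axiom of the twisted structure is the image of the
original axiom under a tensor power of a power of `β`. In particular
`(Δ ∘ β) ⊗ (β ∘ α) = β^⊗3 ∘ (Δ ⊗ α)` and the twisted product on `H^⊗3` is `β^⊗3` applied to the
original one, so invariance of `R` or `c` under `β` is never needed. The derived structures are
the twists by `β = α ^ (2 ^ n - 1)`, since `α ^ (2 ^ n - 1) * α = α ^ (2 ^ n)`.
-/


open TensorProduct LinearMap

variable {k : Type*} [CommRing k]

/-- `(A, μ, α)` is a Hom-associative algebra: `α` is multiplicative with respect to the
k-bilinear multiplication `μ`, and `μ` is Hom-associative. -/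
def IsHomAssoc {A : Type*} [AddCommGroup A] [Module k A]
    (μ : A →ₗ[k] A →ₗ[k] A) (α : A →ₗ[k] A) : Prop :=
  (∀ x y, α (μ x y) = μ (α x) (α y)) ∧
  (∀ x y z, μ (α x) (μ y z) = μ (μ x y) (α z))

/-- `(C, Δ, α)` is a Hom-coassociative coalgebra: `(α ⊗ α) ∘ Δ = Δ ∘ α` and
`(α ⊗ Δ) ∘ Δ = (Δ ⊗ α) ∘ Δ` (up to the associator of the tensor product). -/
def IsHomCoassoc {C : Type*} [AddCommGroup C] [Module k C]
    (Δ : C →ₗ[k] C ⊗[k] C) (α : C →ₗ[k] C) : Prop :=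
  (TensorProduct.map α α ∘ₗ Δ = Δ ∘ₗ α) ∧
  (TensorProduct.map α Δ ∘ₗ Δ =
    (TensorProduct.assoc k C C C).toLinearMap ∘ₗ (TensorProduct.map Δ α ∘ₗ Δ))

/-- `(H, μ, Δ, α)` is a Hom-bialgebra: a Hom-associative algebra and a Hom-coassociative
coalgebra such that `Δ ∘ μ = (μ ⊗ μ) ∘ (Id ⊗ τ ⊗ Id) ∘ (Δ ⊗ Δ)`, stated elementwise as
`Δ (μ x y) = map₂ μ μ (Δ x) (Δ y)`. -/
def IsHomBialgebra {H : Type*} [AddCommGroup H] [Module k H]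
    (μ : H →ₗ[k] H →ₗ[k] H) (Δ : H →ₗ[k] H ⊗[k] H) (α : H →ₗ[k] H) : Prop :=
  IsHomAssoc μ α ∧ IsHomCoassoc Δ α ∧
  ∀ x y, Δ (μ x y) = TensorProduct.map₂ μ μ (Δ x) (Δ y)

/-- `c` is a weak unit of `(H, μ, α)`: `α x = c x = x c` for all `x`. -/
def IsWeakUnit {H : Type*} [AddCommGroup H] [Module k H]
    (μ : H →ₗ[k] H →ₗ[k] H) (α : H →ₗ[k] H) (c : H) : Prop :=
  ∀ x, α x = μ c x ∧ α x = μ x c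

/-- `R₁₂ = R ⊗ c` in `H^⊗3` (grouped as `(H ⊗ H) ⊗ H`). -/
noncomputable def R12 {H : Type*} [AddCommGroup H] [Module k H]
    (R : H ⊗[k] H) (c : H) : (H ⊗[k] H) ⊗[k] H := R ⊗ₜ[k] c

/-- `R₂₃ = c ⊗ R` in `H^⊗3`. -/
noncomputable def R23 {H : Type*} [AddCommGroup H] [Module k H]
    (R : H ⊗[k] H) (c : H) : (H ⊗[k] H) ⊗[k] H :=
  (TensorProduct.assoc k H H H).symm (c ⊗ₜ[k] R)

/-- `R₁₃ = (τ ⊗ Id)(R₂₃)` in `H^⊗3`. -/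
noncomputable def R13 {H : Type*} [AddCommGroup H] [Module k H]
    (R : H ⊗[k] H) (c : H) : (H ⊗[k] H) ⊗[k] H :=
  TensorProduct.map (TensorProduct.comm k H H).toLinearMap LinearMap.id (R23 R c)

/-- Componentwise multiplication on `H^⊗3` induced by `μ`. -/
noncomputable def mul3 {H : Type*} [AddCommGroup H] [Module k H] (μ : H →ₗ[k] H →ₗ[k] H) :
    ((H ⊗[k] H) ⊗[k] H) →ₗ[k] ((H ⊗[k] H) ⊗[k] H) →ₗ[k] (H ⊗[k] H) ⊗[k] H :=
  TensorProduct.map₂ (TensorProduct.map₂ μ μ) μ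

/-- `(H, μ, Δ, α, c, R)` is a quasi-triangular Hom-bialgebra: a Hom-bialgebra with a
weak unit `c` and `R ∈ H ⊗ H` such that `(Δ ⊗ α)(R) = R₁₃R₂₃`, `(α ⊗ Δ)(R) = R₁₃R₁₂`,
and `Δᵒᵖ(x)·R = R·Δ(x)` for all `x`, products being taken componentwise via `μ`. -/
def IsQuasiTriangular {H : Type*} [AddCommGroup H] [Module k H]
    (μ : H →ₗ[k] H →ₗ[k] H) (Δ : H →ₗ[k] H ⊗[k] H)
    (α : H →ₗ[k] H) (c : H) (R : H ⊗[k] H) : Prop :=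
  IsHomBialgebra μ Δ α ∧ IsWeakUnit μ α c ∧
  TensorProduct.map Δ α R = mul3 μ (R13 R c) (R23 R c) ∧
  (TensorProduct.assoc k H H H).symm (TensorProduct.map α Δ R) = mul3 μ (R13 R c) (R12 R c) ∧
  ∀ x, TensorProduct.map₂ μ μ ((TensorProduct.comm k H H) (Δ x)) R =
    TensorProduct.map₂ μ μ R (Δ x)

section Twist

variable {H : Type*} [AddCommGroup H] [Module k H]

/-- The componentwise product of the twisted multiplications is the twist of the componentwise
product. -/
lemma map₂_compr₂ {M N : Type*} [AddCommGroup M] [Module k M] [AddCommGroup N] [Module k N]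
    (μ : M →ₗ[k] M →ₗ[k] M) (ν : N →ₗ[k] N →ₗ[k] N) (f : M →ₗ[k] M) (g : N →ₗ[k] N) :
    TensorProduct.map₂ (μ.compr₂ f) (ν.compr₂ g) =
      (TensorProduct.map₂ μ ν).compr₂ (TensorProduct.map f g) := by
  ext
  simp

lemma mul3_compr₂ (μ : H →ₗ[k] H →ₗ[k] H) (β : H →ₗ[k] H) :
    mul3 (μ.compr₂ β) =
      (mul3 μ).compr₂ (TensorProduct.map (TensorProduct.map β β) β) := by
  simp only [mul3, map₂_compr₂]

lemma IsHomAssoc.twist {μ : H →ₗ[k] H →ₗ[k] H} {α β : H →ₗ[k] H} (h : IsHomAssoc μ α)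
    (hβ : ∀ x y, β (μ x y) = μ (β x) (β y)) (hc : ∀ x, α (β x) = β (α x)) :
    IsHomAssoc (μ.compr₂ β) (β ∘ₗ α) := by
  refine ⟨fun x y => ?_, fun x y z => ?_⟩
  · simp only [compr₂_apply, comp_apply, hc, h.1, hβ]
  · simp only [compr₂_apply, comp_apply]
    rw [← hβ, ← hβ, h.2]

lemma IsHomCoassoc.twist {Δ : H →ₗ[k] H ⊗[k] H} {α β : H →ₗ[k] H} (h : IsHomCoassoc Δ α)
    (hβ : TensorProduct.map β β ∘ₗ Δ = Δ ∘ₗ β) (hc : α ∘ₗ β = β ∘ₗ α) :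
    IsHomCoassoc (Δ ∘ₗ β) (β ∘ₗ α) := by
  have hl : TensorProduct.map (β ∘ₗ α) (Δ ∘ₗ β) ∘ₗ (Δ ∘ₗ β) =
      (TensorProduct.map α Δ ∘ₗ Δ) ∘ₗ β ∘ₗ β := by
    rw [← hc, TensorProduct.map_comp, comp_assoc, ← comp_assoc _ Δ, hβ]
    rfl
  have hr : TensorProduct.map (Δ ∘ₗ β) (β ∘ₗ α) ∘ₗ (Δ ∘ₗ β) =
      (TensorProduct.map Δ α ∘ₗ Δ) ∘ₗ β ∘ₗ β := by
    rw [← hc, TensorProduct.map_comp, comp_assoc, ← comp_assoc _ Δ, hβ]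
    rfl
  refine ⟨?_, ?_⟩
  · rw [TensorProduct.map_comp, comp_assoc, ← comp_assoc _ Δ, h.1, comp_assoc, hc,
      ← comp_assoc, hβ]
  · rw [hl, hr, h.2]
    rfl

lemma IsHomBialgebra.twist {μ : H →ₗ[k] H →ₗ[k] H} {Δ : H →ₗ[k] H ⊗[k] H} {α β : H →ₗ[k] H}
    (h : IsHomBialgebra μ Δ α) (hμ : ∀ x y, β (μ x y) = μ (β x) (β y))
    (hΔ : TensorProduct.map β β ∘ₗ Δ = Δ ∘ₗ β) (hc : α ∘ₗ β = β ∘ₗ α) :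
    IsHomBialgebra (μ.compr₂ β) (Δ ∘ₗ β) (β ∘ₗ α) := by
  refine ⟨h.1.twist hμ (LinearMap.congr_fun hc), h.2.1.twist hΔ hc, fun x y => ?_⟩
  have hΔ' (x : H) : TensorProduct.map β β (Δ x) = Δ (β x) := LinearMap.congr_fun hΔ x
  rw [map₂_compr₂]
  simp only [compr₂_apply, comp_apply]
  rw [← h.2.2, hΔ', ← hμ]

/-- Twisting by an endomorphism `β` of the Hom-bialgebra preserves quasi-triangularity, with the
same weak unit `c` and the same `R`; neither has to be fixed by `β`. -/
lemma IsQuasiTriangular.twist {μ : H →ₗ[k] H →ₗ[k] H} {Δ : H →ₗ[k] H ⊗[k] H}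
    {α β : H →ₗ[k] H} {c : H} {R : H ⊗[k] H} (h : IsQuasiTriangular μ Δ α c R)
    (hμ : ∀ x y, β (μ x y) = μ (β x) (β y))
    (hΔ : TensorProduct.map β β ∘ₗ Δ = Δ ∘ₗ β) (hc : α ∘ₗ β = β ∘ₗ α) :
    IsQuasiTriangular (μ.compr₂ β) (Δ ∘ₗ β) (β ∘ₗ α) c R := by
  obtain ⟨hb, hu, h₁, h₂, h₃⟩ := h
  refine ⟨hb.twist hμ hΔ hc, fun x => ⟨?_, ?_⟩, ?_, ?_, fun x => ?_⟩
  · rw [comp_apply, compr₂_apply, (hu x).1]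
  · rw [comp_apply, compr₂_apply, (hu x).2]
  · rw [mul3_compr₂, compr₂_apply, ← h₁, ← hΔ, TensorProduct.map_comp, comp_apply]
  · rw [mul3_compr₂, compr₂_apply, ← h₂, ← hΔ, TensorProduct.map_comp, comp_apply,
      TensorProduct.map_map_assoc_symm]
  · rw [map₂_compr₂]
    -- Only the image of the third axiom at `β x` under `β ⊗ β` is needed.
    exact congrArg (TensorProduct.map β β) (h₃ (β x))

end Twist

/-- If `(H, μ, Δ, α, c, R)` is a quasi-triangular Hom-bialgebra, then for
each `n ≥ 0` the `n`-th derived tuple `Hⁿ = (H, μ⁽ⁿ⁾, Δ⁽ⁿ⁾, α^(2ⁿ), c, R)` is again a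
quasi-triangular Hom-bialgebra. -/
theorem derived_quasiTriangular {H : Type*} [AddCommGroup H] [Module k H]
    (μ : H →ₗ[k] H →ₗ[k] H) (Δ : H →ₗ[k] H ⊗[k] H) (α : H →ₗ[k] H)
    (c : H) (R : H ⊗[k] H)
    (h : IsQuasiTriangular μ Δ α c R) :
    ∀ n : ℕ, IsQuasiTriangular (μ.compr₂ (α ^ (2 ^ n - 1))) (Δ ∘ₗ (α ^ (2 ^ n - 1)))
      (α ^ (2 ^ n)) c R := by
  intro n
  have hμ (m : ℕ) (x y : H) : (α ^ m) (μ x y) = μ ((α ^ m) x) ((α ^ m) y) := by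
    induction m with
    | zero => rfl
    | succ m ih => simp only [pow_succ', Module.End.mul_apply, ih, h.1.1.1]
  have hΔ (m : ℕ) : TensorProduct.map (α ^ m) (α ^ m) ∘ₗ Δ = Δ ∘ₗ (α ^ m) := by
    induction m with
    | zero => ext x; simp
    | succ m ih =>
      rw [pow_succ', Module.End.mul_eq_comp, TensorProduct.map_comp, comp_assoc, ih,
        ← comp_assoc, h.1.2.1.1, comp_assoc]
  have hpow : α ^ (2 ^ n) = (α ^ (2 ^ n - 1)) ∘ₗ α := by
    rw [← Module.End.mul_eq_comp, ← pow_succ, Nat.sub_add_cancel Nat.one_le_two_pow]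
  rw [hpow]
  exact h.twist (hμ _) (hΔ _) ((Commute.refl α).pow_right _)
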